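/- Let n players have strategy sets X_i, each a nonempty compact convex subset of a Euclidean space, constraint correspondences φ_i : X_{−i} → 2^{X_i} that are both upper and lower semicontinuous with nonempty closed convex values, and continuous payoffs V_i : ∏_i X_i → ℝ such that for every fixed x_{−i}, the map x_i ↦ V_i(x_i, x_{−i}) is quasi-concave on φ_i(x_{−i}). Then there exists a Generalized Nash equilibrium: a profile x* with x*_i ∈ φ_i(x*_{−i}) and V_i(x*_i; x*_{−i}) ≥ V_i(x_i; x*_{−i}) for all x_i ∈ φ_i(x*_{−i}) and all i. -/

import Mathlib

/-- Replace the `i`-th coordinate: build a full strategy profile from player `i`'s strategy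
`xi` and the others' profile `xo`. -/
def combineProfile {n : ℕ} {E : Fin n → Type*} (i : Fin n)
    (xi : E i) (xo : ∀ j : {j : Fin n // j ≠ i}, E j.1) : ∀ j, E j :=
  fun j => if h : j = i then cast (congrArg E h.symm) xi else xo ⟨j, h⟩

/-- The profile of all players other than `i`. -/
def othersProfile {n : ℕ} {E : Fin n → Type*} (i : Fin n)
    (x : ∀ j, E j) : ∀ j : {j : Fin n // j ≠ i}, E j.1 :=
  fun j => x j.1

/-- If `f` identifies exactly one pair of points of `s` (by cardinality), that pair consists
of the points whose removal does not change the image. -/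
theorem Finset.exists_pair_of_card_image_add_one {β γ : Type*} [DecidableEq β] [DecidableEq γ]
    {f : β → γ} {s : Finset β} (h : (s.image f).card + 1 = s.card) :
    ∃ p ∈ s, ∃ q ∈ s, p ≠ q ∧ f p = f q ∧
      ∀ x ∈ s, (s.erase x).image f = s.image f ↔ x = p ∨ x = q := by
  have hlt : (s.image f).card < s.card := by omega
  obtain ⟨p, hp, q, hq, hpq, hf⟩ :=
    Finset.exists_ne_map_eq_of_card_lt_of_maps_to hlt
      (fun x hx => Finset.mem_coe.2 (Finset.mem_image_of_mem f hx))
  have key : ∀ a ∈ s, ∀ b ∈ s, a ≠ b → f a = f b → (s.erase a).image f = s.image f := by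
    intro a ha b hb hab hfab
    refine (Finset.image_subset_image (Finset.erase_subset _ _)).antisymm ?_
    intro z hz
    obtain ⟨x, hx, rfl⟩ := Finset.mem_image.1 hz
    by_cases hxa : x = a
    · exact Finset.mem_image.2 ⟨b, Finset.mem_erase.2 ⟨hab.symm, hb⟩, by rw [hxa, hfab]⟩
    · exact Finset.mem_image_of_mem f (Finset.mem_erase.2 ⟨hxa, hx⟩)
  refine ⟨p, hp, q, hq, hpq, hf, fun x hx => ⟨fun hx' => ?_, ?_⟩⟩
  · by_contra! hne
    have hinj : Set.InjOn f (s.erase x) := by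
      apply Finset.injOn_of_card_image_eq
      rw [hx', Finset.card_erase_of_mem hx]
      omega
    exact hpq (hinj (by simpa using ⟨hp, hne.1.symm⟩)
      (by simpa using ⟨hq, hne.2.symm⟩) hf)
  · rintro (rfl | rfl)
    · exact key _ hp _ hq hpq hf
    · exact key _ hq _ hp hpq.symm hf.symm

/-- A finite set is dominant for a family of orderings if every point lies weakly below the
whole set in one of the orderings. -/
def IsDominant {ι T α : Type*} [LE α] (r : ι → T → α) (σ : Finset T) : Prop :=
  ∀ y, ∃ i, ∀ x ∈ σ, r i y ≤ r i x

section Scarf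

variable {ι T α : Type*} [LinearOrder α] {r : ι → T → α}

theorem IsDominant.mono {σ τ : Finset T} (h : IsDominant r σ) (hτ : τ ⊆ σ) :
    IsDominant r τ :=
  fun y => (h y).imp fun _ hi x hx => hi x (hτ hx)

/-- A dominant set with one element fewer than the number of orderings extends to exactly two
dominant sets by adding one point, provided there is a point `e a` lying above one of its
elements in all orderings but `a`, for each `a`. -/
theorem IsDominant.card_extensions_eq_two [Fintype ι] [DecidableEq ι] [Fintype T]
    [DecidableEq T] (hr : ∀ i, Function.Injective (r i)) {τ : Finset T}
    (hτ : IsDominant r τ) (hcard : τ.card + 1 = Fintype.card ι) {e : ι → T} {x₀ : T}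
    (hx₀ : x₀ ∈ τ) (he : ∀ a k, k ≠ a → r k x₀ < r k (e a)) {E : Finset T}
    (hE : ∀ y, y ∈ E ↔ y ∉ τ ∧ IsDominant r (insert y τ)) : E.card = 2 := by
  choose m hmτ hm using fun i => Finset.exists_min_image τ (r i) ⟨x₀, hx₀⟩
  have himg : Finset.univ.image m = τ := by
    apply Finset.Subset.antisymm
    · intro x hx
      obtain ⟨i, -, rfl⟩ := Finset.mem_image.1 hx
      exact hmτ i
    · intro x hx
      obtain ⟨i, hi⟩ := hτ x
      exact Finset.mem_image.2
        ⟨i, Finset.mem_univ _, hr i ((hm i x hx).antisymm (hi _ (hmτ i)))⟩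
  obtain ⟨i, -, j, -, hij, -, herase⟩ := Finset.exists_pair_of_card_image_add_one
    (f := m) (s := Finset.univ) (by rw [himg, hcard, Finset.card_univ])
  rw [himg] at herase
  let M : ι → Finset T := fun a =>
    Finset.univ.filter fun y => ∀ k, k ≠ a → r k (m k) < r k y
  have hM : ∀ a y, y ∈ M a ↔ ∀ k, k ≠ a → r k (m k) < r k y := fun a y => by simp [M]
  have hMne : ∀ a, (M a).Nonempty := fun a =>
    ⟨e a, (hM _ _).2 fun k hk => (hm k x₀ hx₀).trans_lt (he a k hk)⟩
  choose y hyM hy using fun a => Finset.exists_max_image (M a) (r a) (hMne a)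
  have hdom : ∀ a, ∀ z ∈ M a, r a z ≤ r a (m a) := by
    intro a z hz
    obtain ⟨k, hk⟩ := hτ z
    by_cases hka : k = a
    · exact hka ▸ hk _ (hmτ k)
    · exact absurd (hk _ (hmτ k)) (not_le.2 ((hM a z).1 hz k hka))
  have hmem : ∀ a, (a = i ∨ a = j) → y a ∈ E := by
    intro a ha
    rw [hE]
    constructor
    · intro hyτ
      rw [← (herase a (Finset.mem_univ a)).2 ha] at hyτ
      obtain ⟨l, hl, hly⟩ := Finset.mem_image.1 hyτ
      have := (hM _ _).1 (hyM a) l (Finset.ne_of_mem_erase hl)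
      exact this.ne (by rw [hly])
    · intro z
      by_cases hz : z ∈ M a
      · refine ⟨a, fun x hx => ?_⟩
        rcases Finset.mem_insert.1 hx with rfl | hx
        · exact hy a z hz
        · exact (hdom a z hz).trans (hm a x hx)
      · rw [hM] at hz
        push Not at hz
        obtain ⟨k, hka, hk⟩ := hz
        refine ⟨k, fun x hx => ?_⟩
        rcases Finset.mem_insert.1 hx with rfl | hx
        · exact hk.trans ((hM _ _).1 (hyM a) k hka).le
        · exact hk.trans (hm k x hx)
  have hsub : ∀ z ∈ E, z = y i ∨ z = y j := by
    intro z hz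
    obtain ⟨hzτ, hz⟩ := (hE z).1 hz
    obtain ⟨a, ha⟩ := hz z
    have hex : ∀ x ∈ τ, ∃ k, k ≠ a ∧ m k = x ∧ r k x < r k z := by
      intro x hx
      obtain ⟨k, hk⟩ := hz x
      have hlt : r k x < r k z := (hk z (Finset.mem_insert_self _ _)).lt_of_ne
        fun h => hzτ (hr k h ▸ hx)
      refine ⟨k, ?_, hr k ((hm k x hx).antisymm (hk _ (Finset.mem_insert_of_mem (hmτ k)))), hlt⟩
      rintro rfl
      exact hlt.not_ge (ha x (Finset.mem_insert_of_mem hx))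
    have hea : (Finset.univ.erase a).image m = τ := by
      apply Finset.Subset.antisymm
      · rw [← himg]
        exact Finset.image_subset_image (Finset.erase_subset _ _)
      · intro x hx
        obtain ⟨k, hka, hkx, -⟩ := hex x hx
        exact Finset.mem_image.2 ⟨k, by simpa using hka, hkx⟩
    have hinj : Set.InjOn m (Finset.univ.erase a : Finset ι) := by
      apply Finset.injOn_of_card_image_eq
      rw [hea, Finset.card_erase_of_mem (Finset.mem_univ a), Finset.card_univ]
      omega
    have hzM : z ∈ M a := by
      rw [hM]
      intro k hk
      obtain ⟨l, hla, hlk, hl⟩ := hex (m k) (hmτ k)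
      have : l = k := hinj (by simpa using hla) (by simpa using hk) hlk
      exact this ▸ hl
    have hzy : z = y a := by
      refine hr a ((hy a z hzM).antisymm ?_)
      obtain ⟨k, hk⟩ := hz (y a)
      by_cases hka : k = a
      · exact hka ▸ hk z (Finset.mem_insert_self _ _)
      · exact absurd (hk _ (Finset.mem_insert_of_mem (hmτ k)))
          (not_le.2 ((hM _ _).1 (hyM a) k hka))
    rcases (herase a (Finset.mem_univ a)).1 hea with rfl | rfl
    · exact Or.inl hzy
    · exact Or.inr hzy
  have hne : y i ≠ y j := by
    intro h
    have hj := (hM _ _).1 (hyM j) i hij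
    exact (hdom i _ (hyM i)).not_gt (h ▸ hj)
  refine Finset.card_eq_two.2 ⟨y i, y j, hne, ?_⟩
  ext z
  rw [Finset.mem_insert, Finset.mem_singleton]
  refine ⟨hsub z, ?_⟩
  rintro (rfl | rfl)
  · exact hmem i (Or.inl rfl)
  · exact hmem j (Or.inr rfl)

/-- Scarf's lemma: for a finite set with orderings indexed by `ι`, containing a bottom element
`e i` of each ordering `i` which is large in the other ones, every colouring by `ι` with `e i`
coloured `i` admits a dominant set meeting every colour exactly once. -/
theorem exists_isDominant_image_eq_univ [Fintype ι] [DecidableEq ι] [Nonempty ι] [Fintype T]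
    [DecidableEq T] (hr : ∀ i, Function.Injective (r i)) {e : ι → T}
    (hbot : ∀ i x, r i (e i) ≤ r i x)
    (htop : ∀ i k, k ≠ i → ∀ x, x ∉ Set.range e → r k x < r k (e i))
    (hS : ∃ s, s ∉ Set.range e) {c : T → ι} (hc : ∀ i, c (e i) = i) :
    ∃ σ : Finset T, IsDominant r σ ∧ σ.card = Fintype.card ι ∧ σ.image c = Finset.univ := by
  classical
  by_contra! hno
  let i₀ : ι := Classical.arbitrary ι
  have hcard₀ : (Finset.univ.erase i₀).card + 1 = Fintype.card ι := by
    rw [Finset.card_erase_add_one (Finset.mem_univ _), Finset.card_univ]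
  let D : Finset (Finset T) := Finset.univ.filter fun τ =>
    IsDominant r τ ∧ τ.card + 1 = Fintype.card ι ∧ τ.image c = Finset.univ.erase i₀
  let R : Finset (Finset T) := Finset.univ.filter fun σ =>
    IsDominant r σ ∧ σ.card = Fintype.card ι ∧ σ.image c = Finset.univ.erase i₀
  let A : Finset T → Finset T := fun τ =>
    Finset.univ.filter fun y => y ∉ τ ∧ IsDominant r (insert y τ)
  let B : Finset T → Finset T := fun σ =>
    σ.filter fun x => (σ.erase x).image c = Finset.univ.erase i₀
  have hD : ∀ τ, τ ∈ D ↔ IsDominant r τ ∧ τ.card + 1 = Fintype.card ι ∧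
    τ.image c = Finset.univ.erase i₀ := fun τ => by simp [D]
  have hR : ∀ τ, τ ∈ R ↔ IsDominant r τ ∧ τ.card = Fintype.card ι ∧
    τ.image c = Finset.univ.erase i₀ := fun τ => by simp [R]
  have hA : ∀ τ y, y ∈ A τ ↔ y ∉ τ ∧ IsDominant r (insert y τ) := fun τ y => by simp [A]
  have hB : ∀ σ x, x ∈ B σ ↔ x ∈ σ ∧ (σ.erase x).image c = Finset.univ.erase i₀ :=
    fun σ x => by simp [B]
  have hcount : ∑ τ ∈ D, (A τ).card = ∑ σ ∈ R, (B σ).card := by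
    rw [← Finset.card_sigma, ← Finset.card_sigma]
    refine Finset.card_nbij' (fun p => ⟨insert p.2 p.1, p.2⟩) (fun p => ⟨p.1.erase p.2, p.2⟩)
      ?_ ?_ ?_ ?_
    · rintro ⟨τ, y⟩ h
      simp only [Finset.coe_sigma, Set.mem_sigma_iff, Finset.mem_coe, hD, hA, hR, hB] at h ⊢
      obtain ⟨⟨-, hτc, hτi⟩, hyτ, hy⟩ := h
      have hcard : (insert y τ).card = Fintype.card ι := by
        rw [Finset.card_insert_of_notMem hyτ, hτc]
      refine ⟨⟨hy, hcard, ?_⟩, Finset.mem_insert_self _ _, by rwa [Finset.erase_insert hyτ]⟩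
      have hne := hno _ hy hcard
      rw [Finset.image_insert, hτi] at hne ⊢
      by_cases h0 : c y = i₀
      · exact absurd (by rw [h0, Finset.insert_erase (Finset.mem_univ _)]) hne
      · exact Finset.insert_eq_of_mem (by simpa using h0)
    · rintro ⟨σ, x⟩ h
      simp only [Finset.coe_sigma, Set.mem_sigma_iff, Finset.mem_coe, hD, hA, hR, hB] at h ⊢
      obtain ⟨⟨hσ, hσc, -⟩, hxσ, hx⟩ := h
      refine ⟨⟨hσ.mono (Finset.erase_subset _ _), ?_, hx⟩, Finset.notMem_erase _ _, ?_⟩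
      · rw [Finset.card_erase_add_one hxσ, hσc]
      · rwa [Finset.insert_erase hxσ]
    · rintro ⟨τ, y⟩ h
      simp only [Finset.coe_sigma, Set.mem_sigma_iff, Finset.mem_coe, hA] at h
      simp [Finset.erase_insert h.2.1]
    · rintro ⟨σ, x⟩ h
      simp only [Finset.coe_sigma, Set.mem_sigma_iff, Finset.mem_coe, hB] at h
      simp [Finset.insert_erase h.2.1]
  have hB2 : ∀ σ ∈ R, (B σ).card = 2 := by
    intro σ hσ
    obtain ⟨-, hσc, hσi⟩ := (hR σ).1 hσ
    obtain ⟨p, hp, q, hq, hpq, -, hiff⟩ := Finset.exists_pair_of_card_image_add_one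
      (f := c) (s := σ) (by rw [hσi, hcard₀, hσc])
    rw [hσi] at hiff
    refine Finset.card_eq_two.2 ⟨p, q, hpq, ?_⟩
    ext x
    rw [hB, Finset.mem_insert, Finset.mem_singleton]
    constructor
    · rintro ⟨hx, h⟩
      exact (hiff x hx).1 h
    · rintro (rfl | rfl)
      · exact ⟨hp, (hiff _ hp).2 (Or.inl rfl)⟩
      · exact ⟨hq, (hiff _ hq).2 (Or.inr rfl)⟩
  have heinj : Function.Injective e := fun a b h => by rw [← hc a, ← hc b, h]
  set τ₀ : Finset T := (Finset.univ.erase i₀).image e with hτ₀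
  have hτ₀mem : ∀ x, x ∈ τ₀ ↔ ∃ k, k ≠ i₀ ∧ e k = x := fun x => by simp [hτ₀]
  have hτ₀D : τ₀ ∈ D := by
    rw [hD]
    refine ⟨fun y => ?_, ?_, ?_⟩
    · by_cases hy : y ∈ Set.range e
      · obtain ⟨k, rfl⟩ := hy
        exact ⟨k, fun x _ => hbot k x⟩
      · refine ⟨i₀, fun x hx => ?_⟩
        obtain ⟨k, hk, rfl⟩ := (hτ₀mem x).1 hx
        exact (htop k i₀ hk.symm y hy).le
    · rw [hτ₀, Finset.card_image_of_injective _ heinj, hcard₀]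
    · rw [hτ₀, Finset.image_image, show c ∘ e = id from funext hc, Finset.image_id]
  have hA1 : (A τ₀).card = 1 := by
    obtain ⟨s, hs⟩ := hS
    obtain ⟨y, hyS, hy⟩ := Finset.exists_max_image
      (Finset.univ.filter fun x => x ∉ Set.range e) (r i₀) ⟨s, by simpa using hs⟩
    rw [Finset.mem_filter_univ] at hyS
    have hstrict : ∀ k, ∀ z, z ∉ Set.range e → ¬ r k z ≤ r k (e k) := fun k z hz h =>
      hz ⟨k, hr k ((hbot k z).antisymm h)⟩
    have hforce : ∀ z w, w ∉ Set.range e → IsDominant r (insert z τ₀) → r i₀ w ≤ r i₀ z := by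
      intro z w hw hz
      obtain ⟨k, hk⟩ := hz w
      by_cases hk0 : k = i₀
      · exact hk0 ▸ hk z (Finset.mem_insert_self _ _)
      · exact absurd (hk _ (Finset.mem_insert_of_mem ((hτ₀mem _).2 ⟨k, hk0, rfl⟩)))
          (hstrict k w hw)
    refine Finset.card_eq_one.2 ⟨y, ?_⟩
    ext z
    rw [hA, Finset.mem_singleton]
    constructor
    · rintro ⟨hzτ, hz⟩
      have hzS : z ∉ Set.range e := by
        rintro ⟨k, rfl⟩
        by_cases hk : k = i₀
        · subst hk
          exact hstrict _ s hs (hforce _ s hs hz)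
        · exact hzτ ((hτ₀mem _).2 ⟨k, hk, rfl⟩)
      exact hr i₀ ((hy z (by simpa using hzS)).antisymm (hforce z y hyS hz))
    · rintro rfl
      refine ⟨fun h => ?_, fun w => ?_⟩
      · obtain ⟨k, -, hk⟩ := (hτ₀mem z).1 h
        exact hyS ⟨k, hk⟩
      · by_cases hw : w ∈ Set.range e
        · obtain ⟨k, rfl⟩ := hw
          exact ⟨k, fun x _ => hbot k x⟩
        · refine ⟨i₀, fun x hx => ?_⟩
          rcases Finset.mem_insert.1 hx with rfl | hx
          · exact hy w (by simpa using hw)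
          · obtain ⟨k, hk, rfl⟩ := (hτ₀mem x).1 hx
            exact (htop k i₀ hk.symm w hw).le
  have hA2 : ∀ τ ∈ D.erase τ₀, (A τ).card = 2 := by
    intro τ hτ
    obtain ⟨hne, hτD⟩ := Finset.mem_erase.1 hτ
    obtain ⟨hdom, hcard, himg⟩ := (hD τ).1 hτD
    by_cases hex : ∃ x ∈ τ, x ∉ Set.range e
    · obtain ⟨x, hxτ, hx⟩ := hex
      exact hdom.card_extensions_eq_two hr hcard hxτ (fun a k hk => htop a k hk x hx) (hA τ)
    · push Not at hex
      refine absurd ?_ hne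
      refine Finset.eq_of_subset_of_card_le (fun x hx => ?_) ?_
      · obtain ⟨k, rfl⟩ := hex x hx
        refine (hτ₀mem _).2 ⟨k, ?_, rfl⟩
        have := himg ▸ Finset.mem_image_of_mem c hx
        rw [hc] at this
        exact Finset.ne_of_mem_erase this
      · have := ((hD τ₀).1 hτ₀D).2.1
        omega
  rw [← Finset.add_sum_erase D _ hτ₀D, hA1, Finset.sum_congr rfl hA2, Finset.sum_congr rfl hB2,
    Finset.sum_const, Finset.sum_const, smul_eq_mul, smul_eq_mul] at hcount
  omega

end Scarf

/-- Discrete form of Brouwer's theorem: for every colouring of the grid points of a dilated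
simplex there is a grid point close to a point of each colour that indexes one of its large
coordinates. -/
theorem exists_grid_point_near_colors {ι : Type*} [Fintype ι] [Nonempty ι] (N : ℕ)
    (c : (ι → ℕ) → ι) :
    ∃ v : ι → ℕ, ∑ i, v i = N ∧ ∀ i, v i ≤ Fintype.card ι ∨
      ∃ u : ι → ℕ, ∑ i, u i = N ∧ c u = i ∧
        ∀ j, u j ≤ v j + Fintype.card ι ∧ v j ≤ u j + Fintype.card ι := by
  classical
  let S := {v : ι → ℕ // v ∈ Finset.piAntidiag (Finset.univ : Finset ι) N}
  have hSsum : ∀ v : S, ∑ i, v.1 i = N := fun v => (Finset.mem_piAntidiag.1 v.2).1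
  have hSmk : ∀ v : ι → ℕ, ∑ i, v i = N → v ∈ Finset.piAntidiag (Finset.univ : Finset ι) N :=
    fun v hv => Finset.mem_piAntidiag.2 ⟨hv, fun i _ => Finset.mem_univ i⟩
  let w : ι → S ⊕ ι → ℕ := fun i => Sum.elim (fun v => v.1 i + 1)
    (fun k => if k = i then 0 else N + 2)
  let r : ι → S ⊕ ι → ℕ ×ₗ ℕ := fun i t => toLex (w i t, (Fintype.equivFin (S ⊕ ι) t : ℕ))
  have hwr : ∀ i s t, r i s ≤ r i t → w i s ≤ w i t := by
    intro i s t h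
    rcases Prod.Lex.toLex_le_toLex.1 h with h | h
    · exact h.le
    · exact h.1.le
  have hrlt : ∀ i s t, w i s < w i t → r i s < r i t := fun i s t h =>
    Prod.Lex.toLex_lt_toLex.2 (Or.inl h)
  have hr : ∀ i, Function.Injective (r i) := by
    intro i s t h
    have := congrArg Prod.snd (toLex.injective h)
    exact (Fintype.equivFin (S ⊕ ι)).injective (Fin.ext this)
  have hle : ∀ (v : S) i, v.1 i ≤ N := fun v i =>
    (Finset.single_le_sum (f := v.1) (fun _ _ => Nat.zero_le _) (Finset.mem_univ i)).trans_eq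
      (hSsum v)
  have k₀ : ι := Classical.arbitrary ι
  let s₀ : S := ⟨Pi.single k₀ N, hSmk _ (by simp)⟩
  obtain ⟨σ, hσ, -, hσc⟩ := exists_isDominant_image_eq_univ (r := r) (e := Sum.inr) hr
    (c := Sum.elim (fun v => c v.1) id)
    (by
      intro i x
      rcases eq_or_ne x (Sum.inr i) with rfl | hx
      · exact le_rfl
      · refine (hrlt _ _ _ ?_).le
        rcases x with v | k
        · simp [w]
        · have : k ≠ i := fun h => hx (by rw [h])
          simp [w, this])
    (by
      intro i k hki x hx
      rcases x with v | l
      · refine hrlt _ _ _ ?_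
        have := hle v k
        simp only [w, Sum.elim_inl, Sum.elim_inr, if_neg hki.symm]
        omega
      · exact absurd ⟨l, rfl⟩ hx)
    ⟨Sum.inl s₀, by simp⟩ (fun i => rfl)
  have hcol : ∀ i, Sum.inr i ∉ σ → ∃ u : S, Sum.inl u ∈ σ ∧ c u.1 = i := by
    intro i hi
    have : i ∈ σ.image (Sum.elim (fun v : S => c v.1) id) := by
      rw [hσc]
      exact Finset.mem_univ i
    obtain ⟨x, hx, hxi⟩ := Finset.mem_image.1 this
    rcases x with u | k
    · exact ⟨u, hx, hxi⟩
    · exact absurd (show Sum.inr i ∈ σ from (show k = i from hxi) ▸ hx) hi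
  have hdom : ∀ y : S, ∃ k, Sum.inr k ∉ σ ∧ ∀ u : S, Sum.inl u ∈ σ → y.1 k ≤ u.1 k := by
    intro y
    obtain ⟨k, hk⟩ := hσ (Sum.inl y)
    refine ⟨k, fun h => ?_, fun u hu => ?_⟩
    · simpa [w] using hwr _ _ _ (hk _ h)
    · simpa [w] using hwr _ _ _ (hk _ hu)
  obtain ⟨l, hl, -⟩ := hdom s₀
  obtain ⟨v, hv, -⟩ := hcol l hl
  choose p hpσ hp using fun i => Finset.exists_min_image
    (Finset.univ.filter fun u : S => Sum.inl u ∈ σ) (fun u => u.1 i) ⟨v, by simpa using hv⟩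
  simp only [Finset.mem_filter_univ] at hpσ hp
  let b : ι → ℕ := fun i => if Sum.inr i ∈ σ then 0 else (p i).1 i
  have hbu : ∀ u : S, Sum.inl u ∈ σ → ∀ i, b i ≤ u.1 i := by
    intro u hu i
    simp only [b]
    split_ifs
    · exact Nat.zero_le _
    · exact hp i u hu
  have hN : N < ∑ i, (b i + 1) := by
    by_contra! hle'
    obtain ⟨k, hk, hk'⟩ := hdom
      ⟨fun i => b i + 1 + if i = k₀ then N - ∑ i, (b i + 1) else 0, hSmk _ (by
        rw [Finset.sum_add_distrib, Finset.sum_ite_eq' Finset.univ k₀, if_pos (Finset.mem_univ _)]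
        omega)⟩
    have := hk' (p k) (hpσ k)
    simp only [b, if_neg hk] at this
    omega
  rw [Finset.sum_add_distrib] at hN
  simp only [Finset.sum_const, Finset.card_univ, smul_eq_mul, mul_one] at hN
  have hub : ∀ u : S, Sum.inl u ∈ σ → ∀ i, u.1 i ≤ b i + Fintype.card ι := by
    intro u hu i
    have h1 : ∑ j, u.1 j = ∑ j, b j + ∑ j, (u.1 j - b j) := by
      rw [← Finset.sum_add_distrib]
      exact Finset.sum_congr rfl fun j _ => (Nat.add_sub_cancel' (hbu u hu j)).symm
    have h2 : u.1 i - b i ≤ ∑ j, (u.1 j - b j) :=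
      Finset.single_le_sum (f := fun j => u.1 j - b j) (fun _ _ => Nat.zero_le _)
        (Finset.mem_univ i)
    have h3 := hSsum u
    omega
  refine ⟨v.1, hSsum v, fun i => ?_⟩
  by_cases hi : Sum.inr i ∈ σ
  · left
    have := hub v hv i
    simpa [b, hi] using this
  · right
    obtain ⟨u, hu, hui⟩ := hcol i hi
    refine ⟨u.1, hSsum u, hui, fun j => ?_⟩
    have h1 := hbu u hu j
    have h2 := hbu v hv j
    have h3 := hub u hu j
    have h4 := hub v hv j
    omega

/-- Brouwer's fixed point theorem for the standard simplex. -/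
theorem exists_fixed_point_stdSimplex {ι : Type*} [Fintype ι] [Nonempty ι]
    {f : (ι → ℝ) → ι → ℝ} (hf : ContinuousOn f (stdSimplex ℝ ι))
    (hmaps : Set.MapsTo f (stdSimplex ℝ ι) (stdSimplex ℝ ι)) :
    ∃ x ∈ stdSimplex ℝ ι, f x = x := by
  classical
  have hcpt : IsCompact (stdSimplex ℝ ι) := isCompact_stdSimplex ℝ ι
  have happrox : ∀ ε > 0, ∃ x ∈ stdSimplex ℝ ι, ∀ i, x i - f x i ≤ ε := by
    intro ε hε
    obtain ⟨δ, hδ, hfδ⟩ := Metric.uniformContinuousOn_iff.1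
      (hcpt.uniformContinuousOn_of_continuous hf) (ε / 2) (half_pos hε)
    obtain ⟨N, hN⟩ := exists_nat_gt ((Fintype.card ι : ℝ) / min δ (ε / 2))
    have hmin : 0 < min δ (ε / 2) := lt_min hδ (half_pos hε)
    have hNpos : (0 : ℝ) < N := lt_of_le_of_lt (by positivity) hN
    have hsmall : (Fintype.card ι : ℝ) / N < min δ (ε / 2) := by
      rw [div_lt_iff₀ hmin] at hN
      rw [div_lt_iff₀ hNpos]
      linarith
    let g : (ι → ℕ) → ι → ℝ := fun v i => v i / N
    have hg : ∀ v : ι → ℕ, ∑ i, v i = N → g v ∈ stdSimplex ℝ ι := by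
      intro v hv
      refine ⟨fun i => by positivity, ?_⟩
      simp only [g]
      rw [← Finset.sum_div, ← Nat.cast_sum, hv, div_self hNpos.ne']
    have hcolor : ∀ v : ι → ℕ, ∃ i, ∑ i, v i = N → g v i ≤ f (g v) i := by
      intro v
      by_contra! h
      have hv := (h (Classical.arbitrary ι)).1
      have := Finset.sum_lt_sum_of_nonempty Finset.univ_nonempty fun i _ => (h i).2
      rw [(hmaps (hg v hv)).2, (hg v hv).2] at this
      exact lt_irrefl _ this
    choose c hc using hcolor
    obtain ⟨v, hv, hvc⟩ := exists_grid_point_near_colors N c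
    refine ⟨g v, hg v hv, fun i => ?_⟩
    rcases hvc i with hi | ⟨u, hu, rfl, huv⟩
    · have h1 : g v i ≤ Fintype.card ι / N := by
        simp only [g]
        gcongr
      have h2 := (hmaps (hg v hv)).1 i
      have h3 := min_le_right δ (ε / 2)
      linarith
    · have hclose : ∀ j, |g u j - g v j| ≤ Fintype.card ι / N := by
        intro j
        simp only [g]
        rw [← sub_div, abs_div, abs_of_pos hNpos]
        gcongr
        have h1 : (u j : ℝ) ≤ v j + Fintype.card ι := by exact_mod_cast (huv j).1
        have h2 : (v j : ℝ) ≤ u j + Fintype.card ι := by exact_mod_cast (huv j).2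
        rw [abs_le]
        constructor <;> linarith
      have hdist : dist (g u) (g v) < δ := by
        rw [dist_pi_lt_iff hδ]
        intro j
        rw [Real.dist_eq]
        exact (hclose j).trans_lt (hsmall.trans_le (min_le_left _ _))
      have h1 := (dist_pi_lt_iff (half_pos hε)).1 (hfδ _ (hg u hu) _ (hg v hv) hdist) (c u)
      rw [Real.dist_eq, abs_lt] at h1
      have h2 := abs_le.1 (hclose (c u))
      have h3 := hc u hu
      have h4 := min_le_right δ (ε / 2)
      linarith
  have hcont : ContinuousOn (fun x => ∑ i, max (x i - f x i) 0) (stdSimplex ℝ ι) := by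
    refine continuousOn_finsetSum _ fun i _ => ?_
    have : ContinuousOn (fun x => f x i) (stdSimplex ℝ ι) :=
      (continuous_apply i).comp_continuousOn hf
    exact (((continuous_apply i).continuousOn).sub this).sup continuousOn_const
  obtain ⟨x, hx, hxmin⟩ := hcpt.exists_isMinOn
    ⟨_, single_mem_stdSimplex ℝ (Classical.arbitrary ι)⟩ hcont
  have hcardpos : (0 : ℝ) < Fintype.card ι := by exact_mod_cast Fintype.card_pos
  have hzero : ∑ i, max (x i - f x i) 0 ≤ 0 := by
    refine le_of_forall_pos_le_add fun ε hε => ?_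
    obtain ⟨y, hy, hyε⟩ := happrox (ε / Fintype.card ι) (by positivity)
    calc ∑ i, max (x i - f x i) 0 ≤ ∑ i, max (y i - f y i) 0 := hxmin hy
      _ ≤ ∑ _i : ι, ε / Fintype.card ι :=
        Finset.sum_le_sum fun i _ => max_le (hyε i) (by positivity)
      _ = 0 + ε := by
        rw [Finset.sum_const, Finset.card_univ, nsmul_eq_mul, mul_div_cancel₀ _ hcardpos.ne',
          zero_add]
  have hle : ∀ i, x i ≤ f x i := by
    intro i
    have h1 := Finset.single_le_sum (f := fun i => max (x i - f x i) 0)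
      (fun _ _ => le_max_right _ _) (Finset.mem_univ i)
    have h2 := le_max_left (x i - f x i) 0
    linarith
  refine ⟨x, hx, funext fun i => ?_⟩
  have hsum : ∑ i, x i = ∑ i, f x i := by rw [hx.2, (hmaps hx).2]
  exact ((Finset.sum_eq_sum_iff_of_le fun i _ => hle i).1 hsum i (Finset.mem_univ i)).symm

/-- Approximate form of Kakutani's fixed point theorem: no continuity of the correspondence
is needed. -/
theorem exists_mem_convexHull_iUnion_ball {E : Type*} [NormedAddCommGroup E] [NormedSpace ℝ E]
    {K : Set E} (hK : IsCompact K) (hconv : Convex ℝ K) (hne : K.Nonempty) {F : E → Set E}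
    (hFne : ∀ x ∈ K, (F x).Nonempty) (hFK : ∀ x ∈ K, F x ⊆ K) {ε : ℝ} (hε : 0 < ε) :
    ∃ x ∈ K, x ∈ convexHull ℝ (⋃ t ∈ K ∩ Metric.ball x ε, F t) := by
  obtain ⟨t, htK, htfin, hcover⟩ := hK.finite_cover_balls hε
  have : Fintype t := htfin.fintype
  have hex : ∀ x ∈ K, ∃ j : t, dist x j < ε := by
    intro x hx
    obtain ⟨j, hj, hxj⟩ := Set.mem_iUnion₂.1 (hcover hx)
    exact ⟨⟨j, hj⟩, hxj⟩
  have : Nonempty t := ⟨(hex _ hne.some_mem).choose⟩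
  choose y hy using fun j : t => hFne j (htK j.2)
  have hyK : ∀ j, y j ∈ K := fun j => hFK _ (htK j.2) (hy j)
  let g : t → E → ℝ := fun j x => max (ε - dist x j) 0
  have hg0 : ∀ j x, 0 ≤ g j x := fun j x => le_max_right _ _
  have hgcont : ∀ j, Continuous (g j) := fun j => by fun_prop
  let G : E → ℝ := fun x => ∑ j, g j x
  have hGpos : ∀ x ∈ K, 0 < G x := by
    intro x hx
    obtain ⟨j, hj⟩ := hex x hx
    exact Finset.sum_pos' (fun j _ => hg0 j x)
      ⟨j, Finset.mem_univ _, lt_max_of_lt_left (sub_pos.2 hj)⟩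
  let p : (t → ℝ) → E := fun w => ∑ j, w j • y j
  have hpcont : Continuous p := by fun_prop
  have hpK : ∀ w ∈ stdSimplex ℝ t, p w ∈ K := fun w hw =>
    hconv.sum_mem (fun j _ => hw.1 j) hw.2 fun j _ => hyK j
  obtain ⟨w, hw, hfix⟩ := exists_fixed_point_stdSimplex (ι := t)
    (f := fun w j => g j (p w) / G (p w))
    (by
      refine continuousOn_pi.2 fun j => ?_
      exact ((hgcont j).comp hpcont).continuousOn.div
        ((continuous_finsetSum _ fun j _ => hgcont j).comp hpcont).continuousOn
        fun w hw => (hGpos _ (hpK w hw)).ne')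
    (by
      intro w hw
      refine ⟨fun j => div_nonneg (hg0 _ _) (hGpos _ (hpK w hw)).le, ?_⟩
      rw [← Finset.sum_div]
      exact div_self (hGpos _ (hpK w hw)).ne')
  refine ⟨p w, hpK w hw, ?_⟩
  have hsupp : ∀ j, w j ≠ 0 → dist (p w) j < ε := by
    intro j hj
    by_contra! hle
    refine hj ?_
    rw [← hfix]
    simp only [g, max_eq_right (sub_nonpos.2 hle), zero_div]
  have hsum : p w = ∑ j ∈ Finset.univ.filter (fun j => w j ≠ 0), w j • y j := by
    rw [Finset.sum_filter_of_ne]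
    intro j _ hj h
    simp [h] at hj
  have hmem : ∑ j ∈ Finset.univ.filter (fun j => w j ≠ 0), w j • y j ∈
      convexHull ℝ (⋃ t ∈ K ∩ Metric.ball (p w) ε, F t) := by
    refine (convex_convexHull ℝ _).sum_mem (fun j _ => hw.1 j) ?_ fun j hj => ?_
    · rw [Finset.sum_filter_ne_zero, hw.2]
    · refine subset_convexHull ℝ _ (Set.mem_iUnion₂.2 ⟨j, ⟨htK j.2, ?_⟩, hy j⟩)
      rw [Metric.mem_ball, dist_comm]
      exact hsupp j (Finset.mem_filter.1 hj).2
  rwa [← hsum] at hmem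

/-- Kakutani's fixed point theorem: a correspondence with closed graph and nonempty convex
values on a nonempty compact convex set has a fixed point. -/
theorem exists_mem_self_of_isClosed_graph {E : Type*} [NormedAddCommGroup E] [NormedSpace ℝ E]
    {K : Set E} (hK : IsCompact K) (hconv : Convex ℝ K) (hne : K.Nonempty) {F : E → Set E}
    (hFne : ∀ x ∈ K, (F x).Nonempty) (hFconv : ∀ x ∈ K, Convex ℝ (F x))
    (hFK : ∀ x ∈ K, F x ⊆ K) (hgraph : IsClosed {p : E × E | p.1 ∈ K ∧ p.2 ∈ F p.1}) :
    ∃ x ∈ K, x ∈ F x := by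
  choose u huK hu using fun n : ℕ => exists_mem_convexHull_iUnion_ball hK hconv hne hFne hFK
    (Nat.one_div_pos_of_nat (α := ℝ) (n := n))
  obtain ⟨x, hx, ψ, hψ, hlim⟩ := hK.tendsto_subseq huK
  refine ⟨x, hx, ?_⟩
  have hclosed : IsClosed (F x) := by
    have h := hgraph.preimage (Continuous.prodMk_right x)
    have heq : Prod.mk x ⁻¹' {p : E × E | p.1 ∈ K ∧ p.2 ∈ F p.1} = F x := by
      ext z
      simp [hx]
    rwa [heq] at h
  rw [← hclosed.closure_eq, Metric.closure_eq_iInter_cthickening]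
  refine Set.mem_iInter₂.2 fun δ hδ => ?_
  set W := Metric.thickening δ (F x)
  have hWopen : IsOpen W := Metric.isOpen_thickening
  have hcpt : IsCompact ({p : E × E | p.1 ∈ K ∧ p.2 ∈ F p.1} ∩ Prod.snd ⁻¹' Wᶜ) :=
    (hK.prod hK).of_isClosed_subset (hgraph.inter (hWopen.isClosed_compl.preimage continuous_snd))
      fun p hp => ⟨hp.1.1, hFK _ hp.1.1 hp.1.2⟩
  have hbad : IsClosed (Prod.fst '' ({p : E × E | p.1 ∈ K ∧ p.2 ∈ F p.1} ∩ Prod.snd ⁻¹' Wᶜ)) :=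
    (hcpt.image continuous_fst).isClosed
  obtain ⟨η, hη, hball⟩ := Metric.isOpen_iff.1 hbad.isOpen_compl x (by
    rintro ⟨⟨x', z⟩, ⟨⟨-, hz⟩, hzW⟩, rfl⟩
    exact hzW (Metric.self_subset_thickening hδ _ hz))
  have husc : ∀ t ∈ K, dist t x < η → F t ⊆ W := by
    intro t ht htx z hz
    by_contra hzW
    exact hball htx ⟨(t, z), ⟨⟨ht, hz⟩, hzW⟩, rfl⟩
  have hsmall : ∀ᶠ n : ℕ in Filter.atTop, 1 / ((ψ n : ℝ) + 1) < η / 2 :=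
    (tendsto_one_div_add_atTop_nhds_zero_nat.comp hψ.tendsto_atTop).eventually
      (gt_mem_nhds (half_pos hη))
  refine Metric.closure_thickening_subset_cthickening _ _
    (mem_closure_of_tendsto hlim ?_)
  filter_upwards [hsmall, (Metric.tendsto_nhds.1 hlim) (η / 2) (half_pos hη)] with n hn hxn
  refine convexHull_min ?_ ((hFconv x hx).thickening δ) (hu (ψ n))
  refine Set.iUnion₂_subset fun t ht => husc t ht.1 ?_
  have h1 : dist t (u (ψ n)) < 1 / ((ψ n : ℝ) + 1) := ht.2
  have h2 : dist (u (ψ n)) x < η / 2 := hxn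
  linarith [dist_triangle t (u (ψ n)) x]

theorem combineProfile_othersProfile {n : ℕ} {E : Fin n → Type*} (i : Fin n) (z : E i)
    (x : ∀ j, E j) : combineProfile i z (othersProfile i x) = Function.update x i z := by
  funext j
  by_cases h : j = i
  · subst h
    simp [combineProfile]
  · simp [combineProfile, othersProfile, h]

/-- The set of maximizers over a compact convex set of a continuous quasiconcave function is
nonempty and convex. -/
theorem QuasiconcaveOn.nonempty_convex_maximizers {E : Type*} [AddCommGroup E] [Module ℝ E]
    [TopologicalSpace E] {s : Set E} {f : E → ℝ} (hf : QuasiconcaveOn ℝ s f)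
    (hs : IsCompact s) (hne : s.Nonempty) (hcont : ContinuousOn f s) :
    {y | y ∈ s ∧ ∀ z ∈ s, f z ≤ f y}.Nonempty ∧ Convex ℝ {y | y ∈ s ∧ ∀ z ∈ s, f z ≤ f y} := by
  obtain ⟨y, hy, hmax⟩ := hs.exists_isMaxOn hne hcont
  refine ⟨⟨y, hy, hmax⟩, ?_⟩
  have heq : {y | y ∈ s ∧ ∀ z ∈ s, f z ≤ f y} = {z | z ∈ s ∧ f y ≤ f z} := by
    ext z
    exact and_congr_right fun _ => ⟨fun h => h y hy, fun h w hw => (hmax hw).trans h⟩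
  rw [heq]
  exact hf (f y)

/-- Berge's maximum theorem: the graph of the argmax correspondence of a jointly continuous
function over a continuous correspondence with closed values is closed. -/
theorem isClosed_graph_argmax {A B : Type*} [TopologicalSpace A] [TopologicalSpace B]
    [RegularSpace B] {K : Set A} (hK : IsClosed K) {Φ : A → Set B} {f : A → B → ℝ}
    (hf : Continuous fun p : A × B => f p.1 p.2) (hclosed : ∀ a ∈ K, IsClosed (Φ a))
    (husc : ∀ a ∈ K, ∀ G, IsOpen G → Φ a ⊆ G → ∀ᶠ a' in nhdsWithin a K, Φ a' ⊆ G)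
    (hlsc : ∀ a ∈ K, ∀ G, IsOpen G → (Φ a ∩ G).Nonempty →
      ∀ᶠ a' in nhdsWithin a K, (Φ a' ∩ G).Nonempty) :
    IsClosed {p : A × B | p.1 ∈ K ∧ p.2 ∈ Φ p.1 ∧ ∀ z ∈ Φ p.1, f p.1 z ≤ f p.1 p.2} := by
  rw [← isOpen_compl_iff, isOpen_iff_mem_nhds]
  rintro ⟨a, b⟩ hab
  by_cases ha : a ∈ K
  swap
  · filter_upwards [(hK.isOpen_compl.preimage continuous_fst).mem_nhds
      (show (a, b) ∈ Prod.fst ⁻¹' Kᶜ from ha)] with p hp hp'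
    exact hp hp'.1
  by_cases hb : b ∈ Φ a
  · obtain ⟨z, hz, hlt⟩ : ∃ z ∈ Φ a, f a b < f a z := by
      by_contra! h
      exact hab ⟨ha, hb, h⟩
    obtain ⟨q, hbq, hqz⟩ := exists_between hlt
    have h1 : ∀ᶠ p : A × B in nhds (a, z), q < f p.1 p.2 :=
      hf.continuousAt.eventually (lt_mem_nhds hqz)
    have h2 : ∀ᶠ p : A × B in nhds (a, b), f p.1 p.2 < q :=
      hf.continuousAt.eventually (gt_mem_nhds hbq)
    rw [nhds_prod_eq, Filter.eventually_prod_iff] at h1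
    obtain ⟨P, hP, Q, hQ, hPQ⟩ := h1
    obtain ⟨G, hGQ, hG, hzG⟩ := mem_nhds_iff.1 hQ
    have h3 := eventually_nhdsWithin_iff.1 (hlsc a ha G hG ⟨z, hz, hzG⟩)
    filter_upwards [h2, (continuous_fst.tendsto (a, b)).eventually h3,
      (continuous_fst.tendsto (a, b)).eventually hP] with p hp2 hp3 hpP hp
    obtain ⟨z', hz', hz'G⟩ := hp3 hp.1
    have := hPQ hpP (hGQ hz'G)
    have := hp.2.2 z' hz'
    linarith
  · obtain ⟨W, U, hW, hU, hbW, hΦU, hWU⟩ := SeparatedNhds.of_isCompact_isClosed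
      isCompact_singleton (hclosed a ha) (Set.disjoint_singleton_left.2 hb)
    have h1 := eventually_nhdsWithin_iff.1 (husc a ha U hU hΦU)
    filter_upwards [(continuous_fst.tendsto (a, b)).eventually h1,
      (continuous_snd.tendsto (a, b)).eventually (hW.mem_nhds (hbW rfl))]
      with p hpU hpW hp
    exact Set.disjoint_left.1 hWU hpW (hpU hp.1 hp.2.1)

/-- Arrow–Debreu/Ichiishi existence of a Generalized Nash equilibrium for a
constrained game with nonempty compact convex strategy sets in Euclidean spaces, upper and
lower semicontinuous constraint correspondences with nonempty closed convex values,
continuous payoffs, quasi-concave in own strategy on the feasible set. -/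
theorem stmt_16 (n : ℕ) (d : Fin n → ℕ)
    (X : ∀ i, Set (EuclideanSpace ℝ (Fin (d i))))
    (hne : ∀ i, (X i).Nonempty) (hcp : ∀ i, IsCompact (X i)) (hcv : ∀ i, Convex ℝ (X i))
    (φ : ∀ i : Fin n,
      (∀ j : {j : Fin n // j ≠ i}, EuclideanSpace ℝ (Fin (d j.1))) →
        Set (EuclideanSpace ℝ (Fin (d i))))
    (V : ∀ _ : Fin n, (∀ j, EuclideanSpace ℝ (Fin (d j))) → ℝ)
    (hVcont : ∀ i, Continuous (V i))
    (hφval : ∀ i xo, (∀ j, xo j ∈ X j.1) →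
      (φ i xo).Nonempty ∧ IsClosed (φ i xo) ∧ Convex ℝ (φ i xo) ∧ φ i xo ⊆ X i)
    (hφusc : ∀ i (G : Set (EuclideanSpace ℝ (Fin (d i)))), IsOpen G →
      ∃ U, IsOpen U ∧
        {xo | (∀ j, xo j ∈ X j.1) ∧ φ i xo ⊆ G} = U ∩ {xo | ∀ j, xo j ∈ X j.1})
    (hφlsc : ∀ i (G : Set (EuclideanSpace ℝ (Fin (d i)))), IsOpen G →
      ∃ U, IsOpen U ∧
        {xo | (∀ j, xo j ∈ X j.1) ∧ (φ i xo ∩ G).Nonempty}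
          = U ∩ {xo | ∀ j, xo j ∈ X j.1})
    (hquasi : ∀ i xo, (∀ j, xo j ∈ X j.1) →
      QuasiconcaveOn ℝ (φ i xo) (fun xi => V i (combineProfile i xi xo))) :
    ∃ x : ∀ j, EuclideanSpace ℝ (Fin (d j)),
      (∀ i, x i ∈ X i) ∧
      (∀ i, x i ∈ φ i (othersProfile i x)) ∧
      (∀ i, ∀ xi ∈ φ i (othersProfile i x),
        V i (combineProfile i xi (othersProfile i x)) ≤ V i x) := by
  set K : Set (∀ j, EuclideanSpace ℝ (Fin (d j))) := Set.univ.pi X with hKdef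
  have hK : IsCompact K := isCompact_univ_pi hcp
  have hKmem : ∀ x, x ∈ K ↔ ∀ i, x i ∈ X i := fun x => by simp [hKdef]
  have hothers : ∀ i, ∀ x ∈ K, ∀ j, othersProfile i x j ∈ X j.1 :=
    fun i x hx j => (hKmem x).1 hx j.1
  have hothers_cont : ∀ i, Continuous
      (othersProfile i : (∀ j, EuclideanSpace ℝ (Fin (d j))) → _) :=
    fun i => continuous_pi fun j => continuous_apply j.1
  let B : ∀ i, (∀ j, EuclideanSpace ℝ (Fin (d j))) → Set (EuclideanSpace ℝ (Fin (d i))) :=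
    fun i x => {y | y ∈ φ i (othersProfile i x) ∧ ∀ z ∈ φ i (othersProfile i x),
      V i (combineProfile i z (othersProfile i x)) ≤
        V i (combineProfile i y (othersProfile i x))}
  have hVjoint : ∀ i, Continuous fun p : (∀ j, EuclideanSpace ℝ (Fin (d j))) ×
      EuclideanSpace ℝ (Fin (d i)) => V i (combineProfile i p.2 (othersProfile i p.1)) := by
    intro i
    simp only [combineProfile_othersProfile]
    exact (hVcont i).comp (continuous_fst.update i continuous_snd)
  have hBi : ∀ i, ∀ x ∈ K, (B i x).Nonempty ∧ Convex ℝ (B i x) := by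
    intro i x hx
    obtain ⟨hne', hcl, -, hsub⟩ := hφval i _ (hothers i x hx)
    exact (hquasi i _ (hothers i x hx)).nonempty_convex_maximizers
      ((hcp i).of_isClosed_subset hcl hsub) hne'
      ((hVjoint i).comp (Continuous.prodMk_right x)).continuousOn
  have hgraph : ∀ i, IsClosed {p : (∀ j, EuclideanSpace ℝ (Fin (d j))) ×
      EuclideanSpace ℝ (Fin (d i)) | p.1 ∈ K ∧ p.2 ∈ B i p.1} := by
    intro i
    refine isClosed_graph_argmax hK.isClosed (Φ := fun x => φ i (othersProfile i x))
      (f := fun x z => V i (combineProfile i z (othersProfile i x))) (hVjoint i)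
      (fun x hx => (hφval i _ (hothers i x hx)).2.1) ?_ ?_
    · intro x hx G hG hsub
      obtain ⟨U, hU, heq⟩ := hφusc i G hG
      have hxU : othersProfile i x ∈ U := (heq.subset ⟨hothers i x hx, hsub⟩).1
      refine eventually_nhdsWithin_iff.2 ?_
      filter_upwards [(hU.preimage (hothers_cont i)).mem_nhds hxU] with y hyU hy
      exact (heq.superset ⟨hyU, hothers i y hy⟩).2
    · intro x hx G hG hne'
      obtain ⟨U, hU, heq⟩ := hφlsc i G hG
      have hxU : othersProfile i x ∈ U := (heq.subset ⟨hothers i x hx, hne'⟩).1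
      refine eventually_nhdsWithin_iff.2 ?_
      filter_upwards [(hU.preimage (hothers_cont i)).mem_nhds hxU] with y hyU hy
      exact (heq.superset ⟨hyU, hothers i y hy⟩).2
  obtain ⟨x, hx, hxB⟩ := exists_mem_self_of_isClosed_graph hK
    (convex_pi fun i _ => hcv i) (Set.univ_pi_nonempty_iff.2 hne)
    (F := fun x => Set.univ.pi fun i => B i x)
    (fun x hx => Set.univ_pi_nonempty_iff.2 fun i => (hBi i x hx).1)
    (fun x hx => convex_pi fun i _ => (hBi i x hx).2)
    (fun x hx y hy => (hKmem y).2 fun i =>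
      (hφval i _ (hothers i x hx)).2.2.2 (hy i (Set.mem_univ i)).1)
    (by
      have heq : {p : (∀ j, EuclideanSpace ℝ (Fin (d j))) × (∀ j, EuclideanSpace ℝ (Fin (d j))) |
          p.1 ∈ K ∧ p.2 ∈ Set.univ.pi fun i => B i p.1} =
          Prod.fst ⁻¹' K ∩ ⋂ i, (fun p : (∀ j, EuclideanSpace ℝ (Fin (d j))) ×
            (∀ j, EuclideanSpace ℝ (Fin (d j))) => (p.1, p.2 i)) ⁻¹'
              {p | p.1 ∈ K ∧ p.2 ∈ B i p.1} := by
        ext p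
        simp only [Set.mem_ofPred_eq, Set.mem_univ_pi, Set.mem_inter_iff, Set.mem_preimage,
          Set.mem_iInter]
        exact ⟨fun h => ⟨h.1, fun i => ⟨h.1, h.2 i⟩⟩, fun h => ⟨h.1, fun i => (h.2 i).2⟩⟩
      rw [heq]
      exact (hK.isClosed.preimage continuous_fst).inter (isClosed_iInter fun i =>
        (hgraph i).preimage
          (continuous_fst.prodMk ((continuous_apply i).comp continuous_snd))))
  refine ⟨x, (hKmem x).1 hx, fun i => (hxB i (Set.mem_univ i)).1, fun i xi hxi => ?_⟩
  have hself : combineProfile i (x i) (othersProfile i x) = x :=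
    (combineProfile_othersProfile i (x i) x).trans (Function.update_eq_self i x)
  exact ((hxB i (Set.mem_univ i)).2 xi hxi).trans_eq (congrArg (V i) hself)
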